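/- arXiv:1206.3021 — 3 statements merged into one kernel-verified Lean document; each statement's English description precedes it below -/
import Mathlib

section
/- In 𝒢(V): (i) every point is incident with at least one line; (ii) for every incident point-line pair (P₁,L₁) there is a point P₂ incident with L₁ not neighboring P₁; (iii) for every triple (P₁,L₁,P₂) with P₁,P₂ non-neighboring points incident with L₁, there is a line L₂ through P₂ not neighboring L₁; (iv) for every quadruple (P₁,L₁,P₂,L₂) with P₁,P₂ non-neighboring points on L₁ and L₁,L₂ non-neighboring lines through P₂, there is a point P₃ incident with L₂ such that (P₁,P₂,P₃) is a proper ordered triangle; (v) every proper ordered triangle (P₁,P₂,P₃) extends to a proper ordered quadrangle (P₁,P₂,P₃,P₄). -/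
/-! Context: `K` a field, `V` a commutative, associative, unital 2-dimensional `K`-algebra in
which every element is a product of two elements; `V₀ = K·r ∪ K·s` is the set of non-units.
Points and lines of the geometry `𝒢(V)` are represented by triples in `V × V × V` with
trivial annihilator, up to multiplication by a unit. -/

/-- The triple `p` has trivial annihilator (so `V*p` is a point/line of `𝒢(V)`). -/
def TrivAnn {V : Type} [CommRing V] (p : V × V × V) : Prop :=
  ∀ v : V, v * p.1 = 0 → v * p.2.1 = 0 → v * p.2.2 = 0 → v = 0

/-- The point (represented by) `p` is incident with the line (represented by) `L`. -/
def Incid {V : Type} [CommRing V] (p L : V × V × V) : Prop :=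
  L.1 * p.1 + L.2.1 * p.2.1 + L.2.2 * p.2.2 = 0

/-- Two points (or two lines) are neighboring. -/
def Nbr {V : Type} [CommRing V] (p q : V × V × V) : Prop :=
  ∃ k l : V, (k, l) ≠ ((0 : V), (0 : V)) ∧
    (k * p.1, k * p.2.1, k * p.2.2) = (l * q.1, l * q.2.1, l * q.2.2)

/-- The point `p` and the line `L` are neighboring. -/
def NbrPL {V : Type} [CommRing V] (p L : V × V × V) : Prop :=
  ¬ IsUnit (L.1 * p.1 + L.2.1 * p.2.1 + L.2.2 * p.2.2)

/-- `p` and `q` represent the same point (resp. line) of `𝒢(V)`. -/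
def SameCls {V : Type} [CommRing V] (p q : V × V × V) : Prop :=
  ∃ u : V, IsUnit u ∧ (u * p.1, u * p.2.1, u * p.2.2) = q

/-- The standing hypotheses on the algebra `V` over `K`: it is `2`-dimensional, every element
is a product of two elements, and the set of non-units is `K·r ∪ K·s`. -/
def GoodAlg (K : Type) [Field K] (V : Type) [CommRing V] [Algebra K V] (r s : V) : Prop :=
  Module.finrank K V = 2 ∧ (∀ v : V, ∃ a b : V, v = a * b) ∧
    (∀ v : V, ¬ IsUnit v ↔ ((∃ k : K, v = k • r) ∨ (∃ k : K, v = k • s)))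

/-- A proper ordered triangle: three pairwise non-neighboring points such that the three
(unique) joining lines are pairwise non-neighboring. -/
def ProperTri {V : Type} [CommRing V] (P₁ P₂ P₃ : V × V × V) : Prop :=
  ¬ Nbr P₁ P₂ ∧ ¬ Nbr P₂ P₃ ∧ ¬ Nbr P₃ P₁ ∧
  ∃ L₁₂ L₂₃ L₃₁ : V × V × V,
    TrivAnn L₁₂ ∧ TrivAnn L₂₃ ∧ TrivAnn L₃₁ ∧
    Incid P₁ L₁₂ ∧ Incid P₂ L₁₂ ∧ Incid P₂ L₂₃ ∧ Incid P₃ L₂₃ ∧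
    Incid P₃ L₃₁ ∧ Incid P₁ L₃₁ ∧
    ¬ Nbr L₁₂ L₂₃ ∧ ¬ Nbr L₂₃ L₃₁ ∧ ¬ Nbr L₃₁ L₁₂

/-- A proper ordered quadrangle: every ordered subtriple is a proper ordered triangle. -/
def ProperQuad {V : Type} [CommRing V] (P₁ P₂ P₃ P₄ : V × V × V) : Prop :=
  ∀ i j k : Fin 4, i ≠ j → i ≠ k → j ≠ k →
    ProperTri (![P₁, P₂, P₃, P₄] i) (![P₁, P₂, P₃, P₄] j) (![P₁, P₂, P₃, P₄] k)

/-! In a zero-dimensional ring a finitely generated ideal with trivial annihilator is the whole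
ring, so the points and lines of `𝒢(V)` are the unimodular triples. By the identity
`(p × q) × w = (p · w) q - (q · w) p`, two triples are non-neighboring exactly when their cross
product has trivial annihilator; it then spans the unique line joining them, and a proper triangle
is a triple whose determinant is not a zero divisor. The fourth point of a proper quadrangle is the
sum of the other three. -/

open Matrix
open scoped nonZeroDivisors

section ZeroDimensional

variable {R : Type*} [CommRing R] [Ring.KrullDimLE 0 R]

theorem exists_pow_mul_one_sub_mul_eq_zero (x : R) :
    ∃ (n : ℕ) (y : R), x ^ n * (1 - x * y) = 0 := by
  let S : Submonoid R :=
    { carrier := {a | ∃ (n : ℕ) (y : R), x ^ n * (1 - x * y) = a}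
      one_mem' := ⟨0, 0, by ring⟩
      mul_mem' := by
        rintro _ _ ⟨m, y, rfl⟩ ⟨n, z, rfl⟩
        exact ⟨m + n, y + z - x * y * z, by ring⟩ }
  by_contra hx
  have hS : Disjoint ((⊥ : Ideal R) : Set R) S := by
    rw [Set.disjoint_left]
    rintro a rfl ha
    exact hx ha
  obtain ⟨P, hP, -, hPS⟩ := Ideal.exists_le_prime_disjoint ⊥ S hS
  have hxP : x ∉ P := fun h ↦ Set.disjoint_left.mp hPS h ⟨1, 0, by ring⟩
  obtain ⟨y, i, hi, hyi⟩ := hP.isMaximal'.exists_inv hxP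
  refine Set.disjoint_left.mp hPS hi ⟨0, y, ?_⟩
  linear_combination -hyi

theorem exists_one_sub_mem_and_le_radical_torsionOf {I : Ideal R} (hI : I.FG) :
    ∃ u : R, 1 - u ∈ I ∧ I ≤ (Ideal.torsionOf R R u).radical := by
  induction I, hI using Submodule.fg_induction with
  | singleton x =>
    obtain ⟨n, y, hxy⟩ := exists_pow_mul_one_sub_mul_eq_zero x
    refine ⟨1 - x * y, Ideal.mem_span_singleton.mpr ⟨y, by ring⟩, ?_⟩
    exact (Ideal.span_singleton_le_iff_mem _).mpr ⟨n, hxy⟩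
  | sup I J _ _ hI hJ =>
    obtain ⟨u, huI, hu⟩ := hI
    obtain ⟨w, hwJ, hw⟩ := hJ
    refine ⟨u * w, ?_, sup_le (hu.trans ?_) (hw.trans ?_)⟩
    · have h : 1 - u * w = (1 - u) + u * (1 - w) := by ring
      exact h ▸ Submodule.add_mem_sup huI (Ideal.mul_mem_left J u hwJ)
    all_goals
      refine Ideal.radical_mono fun a ha ↦ ?_
      simp only [Ideal.mem_torsionOf_iff, smul_eq_mul] at ha ⊢
    · linear_combination w * ha
    · linear_combination u * ha

theorem eq_top_of_fg_of_annihilator_eq_bot {I : Ideal R} (hI : I.FG) (h : I.annihilator = ⊥) :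
    I = ⊤ := by
  obtain ⟨u, huI, hu⟩ := exists_one_sub_mem_and_le_radical_torsionOf hI
  obtain ⟨n, hn⟩ := Ideal.exists_pow_le_of_le_radical_of_fg hu hI
  have annihilator_pow (k : ℕ) : (I ^ k).annihilator = ⊥ := by
    induction k with
    | zero => simpa [Submodule.annihilator_top] using Module.annihilator_eq_bot.mpr inferInstance
    | succ k ih =>
      refine (Submodule.eq_bot_iff _).mpr fun t ht ↦ ?_
      suffices t ∈ (I ^ k).annihilator by simpa [ih] using this
      refine Submodule.mem_annihilator.mpr fun a ha ↦ ?_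
      suffices t * a ∈ I.annihilator by simpa [h] using this
      refine Submodule.mem_annihilator.mpr fun b hb ↦ ?_
      have hab : a * b ∈ I ^ (k + 1) := pow_succ I k ▸ Ideal.mul_mem_mul ha hb
      simpa [mul_assoc] using Submodule.mem_annihilator.mp ht _ hab
  have hu0 : u = 0 := by
    suffices u ∈ (I ^ n).annihilator by simpa [annihilator_pow n] using this
    refine Submodule.mem_annihilator.mpr fun a ha ↦ ?_
    rw [smul_eq_mul, mul_comm]
    exact hn ha
  rw [Ideal.eq_top_iff_one]
  simpa [hu0] using huI

theorem exists_dotProduct_eq_one {ι : Type*} [Fintype ι] {p : ι → R}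
    (hp : ∀ t : R, t • p = 0 → t = 0) : ∃ m : ι → R, m ⬝ᵥ p = 1 := by
  have hfg : (Ideal.span (Set.range p)).FG := Submodule.fg_span (Set.finite_range p)
  have hann : (Ideal.span (Set.range p)).annihilator = ⊥ := by
    refine (Submodule.eq_bot_iff _).mpr fun t ht ↦ hp t (funext fun i ↦ ?_)
    exact Submodule.mem_annihilator.mp ht _ (Ideal.subset_span ⟨i, rfl⟩)
  have hone := (Ideal.eq_top_iff_one _).mp (eq_top_of_fg_of_annihilator_eq_bot hfg hann)
  exact Ideal.mem_span_range_iff_exists_fun.mp hone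

theorem exists_span_pair_le_radical_span_add_mul (x y : R) :
    ∃ b : R, Ideal.span {x, y} ≤ (Ideal.span {x + b * y}).radical := by
  obtain ⟨n, z, hxz⟩ := exists_pow_mul_one_sub_mul_eq_zero x
  -- Modulo a prime, `1 - x * z` is `1` where `x` vanishes and `0` where it does not.
  refine ⟨1 - x * z, ?_⟩
  rw [Ideal.radical_eq_sInf, le_sInf_iff]
  rintro P ⟨hP, hPprime⟩
  replace hP : x + (1 - x * z) * y ∈ P := (Ideal.span_singleton_le_iff_mem P).mp hP
  have hx : x ∈ P := by
    rcases hPprime.mem_or_mem (hxz ▸ P.zero_mem : x ^ n * (1 - x * z) ∈ P) with h | h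
    · exact hPprime.mem_of_pow_mem n h
    · exact (P.add_mem_iff_left (P.mul_mem_right y h)).mp hP
  have hy : y ∈ P := by
    have h : y = (x + (1 - x * z) * y) - x * (1 - z * y) := by ring
    exact h ▸ P.sub_mem hP (P.mul_mem_right _ hx)
  rw [Ideal.span_le]
  rintro a (rfl | rfl) <;> assumption

theorem exists_dotProduct_eq_zero {p : Fin 3 → R} (hp : ∀ t : R, t • p = 0 → t = 0) :
    ∃ L : Fin 3 → R, L ⬝ᵥ p = 0 ∧ ∀ t : R, t • L = 0 → t = 0 := by
  obtain ⟨m, hm⟩ := exists_dotProduct_eq_one hp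
  obtain ⟨b, hb⟩ := exists_span_pair_le_radical_span_add_mul (p 0) (p 1)
  set w := p 0 + b * p 1 with hw
  have hwz : Ideal.span {w, p 2} = ⊤ := by
    have hle : Ideal.span {p 0, p 1} ≤ (Ideal.span {w, p 2}).radical :=
      hb.trans (Ideal.radical_mono (Ideal.span_mono (by simp)))
    have h0 := hle (Ideal.mem_span_pair.mpr ⟨1, 0, by ring⟩ : p 0 ∈ _)
    have h1 := hle (Ideal.mem_span_pair.mpr ⟨0, 1, by ring⟩ : p 1 ∈ _)
    have h2 : p 2 ∈ (Ideal.span {w, p 2}).radical := Ideal.le_radical (Ideal.subset_span (by simp))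
    rw [← Ideal.radical_eq_top, Ideal.eq_top_iff_one, ← hm, vec3_dotProduct]
    exact add_mem (add_mem (Ideal.mul_mem_left _ _ h0) (Ideal.mul_mem_left _ _ h1))
      (Ideal.mul_mem_left _ _ h2)
  obtain ⟨c, d, hcd⟩ := Ideal.mem_span_pair.mp ((Ideal.eq_top_iff_one _).mp hwz)
  refine ⟨![-p 2, -(b * p 2), w], ?_, fun t ht ↦ ?_⟩
  · simp only [hw, vec3_dotProduct, cons_val]
    ring
  · have htz : t * -p 2 = 0 := congrFun ht 0
    have htw : t * w = 0 := congrFun ht 2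
    linear_combination (-t) * hcd + c * htw - d * htz

end ZeroDimensional

section CrossProduct

variable {R : Type*} [CommRing R] {p q L : Fin 3 → R}

theorem linearIndependent_pair_iff_cross :
    LinearIndependent R ![p, q] ↔ ∀ t : R, t • (p ⨯₃ q) = 0 → t = 0 := by
  rw [LinearIndependent.pair_iff]
  refine ⟨fun h t ht ↦ ?_, fun h s t hst ↦ ⟨h s ?_, h t ?_⟩⟩
  · have htp : t • p = 0 := by
      refine dotProduct_eq_zero _ fun w ↦ ?_
      have hpq : -(t * q ⬝ᵥ w) • p + (t * p ⬝ᵥ w) • q = 0 := calc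
        _ = t • (p ⨯₃ q ⨯₃ w) := by rw [cross_cross_eq_smul_sub_smul]; module
        _ = (t • (p ⨯₃ q)) ⨯₃ w := by simp
        _ = 0 := by simp [ht]
      simpa using (h _ _ hpq).2
    exact (h t 0 (by simp [htp])).1
  · simpa using congrArg (· ⨯₃ q) hst
  · simpa using congrArg (p ⨯₃ ·) hst

theorem eq_smul_cross {n : Fin 3 → R} (hn : n ⬝ᵥ p ⨯₃ q = 1) (hp : L ⬝ᵥ p = 0)
    (hq : L ⬝ᵥ q = 0) : L = (n ⬝ᵥ L) • (p ⨯₃ q) := by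
  have hparallel : p ⨯₃ q ⨯₃ L = 0 := by
    rw [cross_cross_eq_smul_sub_smul, dotProduct_comm p, dotProduct_comm q, hp, hq]
    simp
  have h := congrArg (n ⨯₃ ·) hparallel
  rw [cross_cross_eq_smul_sub_smul', dotProduct_comm _ n, hn, one_smul, map_zero] at h
  exact (sub_eq_zero.mp h).symm

theorem cross_cross_eq_self {m : Fin 3 → R} (hm : m ⬝ᵥ p = 1) (hp : L ⬝ᵥ p = 0) :
    p ⨯₃ (L ⨯₃ m) = L := by
  rw [cross_cross_eq_smul_sub_smul', dotProduct_comm p, hm, hp]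
  simp

end CrossProduct

section Triples

variable {V : Type} [CommRing V] {p q r L M : V × V × V}

/-- The linear identification of triples with vectors `Fin 3 → V`, which makes the dot and cross
products of Mathlib available in `𝒢(V)`. -/
def coords : (V × V × V) ≃ₗ[V] (Fin 3 → V) where
  toFun p := ![p.1, p.2.1, p.2.2]
  invFun v := (v 0, v 1, v 2)
  map_add' _ _ := by simp
  map_smul' _ _ := by simp
  left_inv _ := rfl
  right_inv v := by ext i; fin_cases i <;> rfl

theorem coords_apply (p : V × V × V) : coords p = ![p.1, p.2.1, p.2.2] :=
  rfl

/-- The cross product of two triples: the line joining two points, dually the intersection point of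
two lines. -/
def cross (p q : V × V × V) : V × V × V :=
  coords.symm (coords p ⨯₃ coords q)

/-- The scalar triple product, i.e. the determinant, of three triples. -/
def tripleProduct (p q r : V × V × V) : V :=
  coords p ⬝ᵥ coords q ⨯₃ coords r

@[simp]
theorem coords_cross (p q : V × V × V) : coords (cross p q) = coords p ⨯₃ coords q :=
  coords.apply_symm_apply _

theorem smul_cross (a : V) (p q : V × V × V) : cross (a • p) q = a • cross p q := by
  simp [cross]

theorem tripleProduct_rotate (p q r : V × V × V) : tripleProduct p q r = tripleProduct q r p :=
  triple_product_permutation _ _ _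

theorem trivAnn_iff : TrivAnn p ↔ ∀ t : V, t • p = 0 → t = 0 := by
  simp [TrivAnn, Prod.ext_iff]

theorem trivAnn_iff_coords : TrivAnn p ↔ ∀ t : V, t • coords p = 0 → t = 0 := by
  simp only [trivAnn_iff, ← map_smul, LinearEquiv.map_eq_zero_iff]

theorem trivAnn_smul_iff {a : V} : TrivAnn (a • p) ↔ a ∈ V⁰ ∧ TrivAnn p := by
  simp only [trivAnn_iff, mem_nonZeroDivisors_iff_right, smul_smul]
  refine ⟨fun h ↦ ⟨fun t ht ↦ h t (by rw [ht, zero_smul]), fun t ht ↦ h t ?_⟩,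
    fun ⟨ha, hp⟩ t ht ↦ ha t (hp _ ht)⟩
  rw [mul_comm, mul_smul, ht, smul_zero]

theorem incid_iff : Incid p L ↔ coords L ⬝ᵥ coords p = 0 := by
  rw [coords_apply, coords_apply, vec3_dotProduct]
  rfl

theorem incid_comm : Incid p L ↔ Incid L p := by
  rw [incid_iff, incid_iff, dotProduct_comm]

theorem incid_cross_left (p q : V × V × V) : Incid p (cross p q) := by
  rw [incid_comm, incid_iff, coords_cross, dot_self_cross]

theorem incid_cross_right (p q : V × V × V) : Incid q (cross p q) := by
  rw [incid_comm, incid_iff, coords_cross, dot_cross_self]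

theorem not_nbr_iff_linearIndependent :
    ¬ Nbr p q ↔ LinearIndependent V ![coords p, coords q] := by
  have nbr_iff : Nbr p q ↔ ∃ k l : V, (k, l) ≠ (0, 0) ∧ k • p = l • q := Iff.rfl
  rw [nbr_iff, LinearIndependent.pair_iff]
  refine ⟨fun h k l hkl ↦ ?_, fun h ⟨k, l, hkl, hpq⟩ ↦ hkl ?_⟩
  · by_contra hne
    refine h ⟨k, -l, by simpa [Prod.ext_iff] using hne, coords.injective ?_⟩
    simpa [eq_neg_iff_add_eq_zero] using hkl
  · have hkl := h k (-l) (by simp [← map_smul, hpq])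
    simpa [Prod.ext_iff] using hkl

theorem not_nbr_iff_trivAnn_cross : ¬ Nbr p q ↔ TrivAnn (cross p q) := by
  rw [not_nbr_iff_linearIndependent, linearIndependent_pair_iff_cross, trivAnn_iff_coords,
    coords_cross]

theorem trivAnn_right_of_not_nbr (h : ¬ Nbr p q) : TrivAnn q := by
  rw [not_nbr_iff_linearIndependent, LinearIndependent.pair_iff] at h
  exact trivAnn_iff_coords.mpr fun t ht ↦ (h 0 t (by simp [ht])).2

theorem cross_cross_of_incid (h : Incid q M) :
    cross (cross p q) M = (coords p ⬝ᵥ coords M) • q := by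
  apply coords.injective
  rw [incid_iff, dotProduct_comm] at h
  simp [cross_cross_eq_smul_sub_smul, h]

theorem not_nbr_of_tripleProduct_mem_nonZeroDivisors (h : tripleProduct p q r ∈ V⁰) :
    ¬ Nbr p q := by
  rw [not_nbr_iff_trivAnn_cross, trivAnn_iff_coords, coords_cross]
  intro t ht
  refine mem_nonZeroDivisors_iff_right.mp h t ?_
  rw [← tripleProduct_rotate, tripleProduct, ← smul_eq_mul, ← dotProduct_smul, ht,
    dotProduct_zero]

theorem not_nbr_cross_of_tripleProduct_mem_nonZeroDivisors (h : tripleProduct p q r ∈ V⁰) :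
    ¬ Nbr (cross p q) (cross q r) := by
  rw [not_nbr_iff_trivAnn_cross, cross_cross_of_incid (incid_cross_left q r), coords_cross,
    trivAnn_smul_iff]
  exact ⟨h, trivAnn_right_of_not_nbr (not_nbr_of_tripleProduct_mem_nonZeroDivisors h)⟩

theorem properTri_of_tripleProduct_mem_nonZeroDivisors (h : tripleProduct p q r ∈ V⁰) :
    ProperTri p q r := by
  have h' : tripleProduct q r p ∈ V⁰ := tripleProduct_rotate p q r ▸ h
  have h'' : tripleProduct r p q ∈ V⁰ := tripleProduct_rotate q r p ▸ h'
  have hpq := not_nbr_of_tripleProduct_mem_nonZeroDivisors h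
  have hqr := not_nbr_of_tripleProduct_mem_nonZeroDivisors h'
  have hrp := not_nbr_of_tripleProduct_mem_nonZeroDivisors h''
  exact ⟨hpq, hqr, hrp, cross p q, cross q r, cross r p,
    not_nbr_iff_trivAnn_cross.mp hpq, not_nbr_iff_trivAnn_cross.mp hqr,
    not_nbr_iff_trivAnn_cross.mp hrp,
    incid_cross_left p q, incid_cross_right p q, incid_cross_left q r, incid_cross_right q r,
    incid_cross_left r p, incid_cross_right r p,
    not_nbr_cross_of_tripleProduct_mem_nonZeroDivisors h,
    not_nbr_cross_of_tripleProduct_mem_nonZeroDivisors h',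
    not_nbr_cross_of_tripleProduct_mem_nonZeroDivisors h''⟩

theorem tripleProduct_quadrangle (p q r : V × V × V) {i j k : Fin 4} (hij : i ≠ j) (hik : i ≠ k)
    (hjk : j ≠ k) :
    tripleProduct (![p, q, r, p + q + r] i) (![p, q, r, p + q + r] j) (![p, q, r, p + q + r] k) =
        tripleProduct p q r ∨
      tripleProduct (![p, q, r, p + q + r] i) (![p, q, r, p + q + r] j)
        (![p, q, r, p + q + r] k) = -tripleProduct p q r := by
  fin_cases i <;> fin_cases j <;> fin_cases k <;> try contradiction
  all_goals
    simp only [tripleProduct, coords_apply, cross_apply, vec3_dotProduct]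
    dsimp
    first
      | exact Or.inl (by ring1)
      | exact Or.inr (by ring1)

theorem properQuad_of_tripleProduct_mem_nonZeroDivisors (h : tripleProduct p q r ∈ V⁰) :
    ProperQuad p q r (p + q + r) := by
  intro i j k hij hik hjk
  apply properTri_of_tripleProduct_mem_nonZeroDivisors
  rcases tripleProduct_quadrangle p q r hij hik hjk with hpos | hneg
  · rwa [hpos]
  · simpa [hneg, mem_nonZeroDivisors_iff_right] using h

end Triples

section Geometry

variable {V : Type} [CommRing V] [Ring.KrullDimLE 0 V] {P Q R L M : V × V × V}

theorem exists_incid (hP : TrivAnn P) : ∃ L, TrivAnn L ∧ Incid P L := by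
  obtain ⟨L, hLP, hL⟩ := exists_dotProduct_eq_zero (trivAnn_iff_coords.mp hP)
  exact ⟨coords.symm L, by simpa [trivAnn_iff_coords] using hL, by simpa [incid_iff] using hLP⟩

theorem exists_incid_cross_eq (hP : TrivAnn P) (hPL : Incid P L) :
    ∃ Q, Incid Q L ∧ cross P Q = L := by
  obtain ⟨m, hm⟩ := exists_dotProduct_eq_one (trivAnn_iff_coords.mp hP)
  refine ⟨cross L (coords.symm m), incid_comm.mp (incid_cross_left _ _), coords.injective ?_⟩
  simpa using cross_cross_eq_self hm (incid_iff.mp hPL)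

theorem exists_incid_not_nbr (hP : TrivAnn P) (hL : TrivAnn L) (hPL : Incid P L) :
    ∃ Q, TrivAnn Q ∧ Incid Q L ∧ ¬ Nbr P Q := by
  obtain ⟨Q, hQL, rfl⟩ := exists_incid_cross_eq hP hPL
  have hPQ : ¬ Nbr P Q := not_nbr_iff_trivAnn_cross.mpr hL
  exact ⟨Q, trivAnn_right_of_not_nbr hPQ, hQL, hPQ⟩

theorem exists_eq_smul_cross (hPQ : ¬ Nbr P Q) (hPL : Incid P L) (hQL : Incid Q L) :
    ∃ a : V, L = a • cross P Q := by
  rw [not_nbr_iff_trivAnn_cross, trivAnn_iff_coords, coords_cross] at hPQ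
  obtain ⟨n, hn⟩ := exists_dotProduct_eq_one hPQ
  refine ⟨n ⬝ᵥ coords L, coords.injective ?_⟩
  rw [map_smul, coords_cross]
  exact eq_smul_cross hn (incid_iff.mp hPL) (incid_iff.mp hQL)

theorem dotProduct_mem_nonZeroDivisors (hPQ : ¬ Nbr P Q) (hPL : Incid P L) (hQL : Incid Q L)
    (hQM : Incid Q M) (hLM : ¬ Nbr L M) : coords P ⬝ᵥ coords M ∈ V⁰ := by
  obtain ⟨a, rfl⟩ := exists_eq_smul_cross hPQ hPL hQL
  rw [not_nbr_iff_trivAnn_cross, smul_cross, cross_cross_of_incid hQM, trivAnn_smul_iff,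
    trivAnn_smul_iff] at hLM
  exact hLM.2.1

theorem properTri_iff_tripleProduct_mem_nonZeroDivisors :
    ProperTri P Q R ↔ tripleProduct P Q R ∈ V⁰ := by
  refine ⟨?_, properTri_of_tripleProduct_mem_nonZeroDivisors⟩
  rintro ⟨hPQ, hQR, -, L, M, -, -, -, -, hPL, hQL, hQM, hRM, -, -, hLM, -, -⟩
  have hPM := dotProduct_mem_nonZeroDivisors hPQ hPL hQL hQM hLM
  obtain ⟨b, rfl⟩ := exists_eq_smul_cross hQR hQM hRM
  rw [map_smul, dotProduct_smul, coords_cross, smul_eq_mul, mul_mem_nonZeroDivisors] at hPM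
  exact hPM.2

theorem exists_incid_properTri (hQ : TrivAnn Q) (hM : TrivAnn M) (hPQ : ¬ Nbr P Q)
    (hPL : Incid P L) (hQL : Incid Q L) (hQM : Incid Q M) (hLM : ¬ Nbr L M) :
    ∃ R, TrivAnn R ∧ Incid R M ∧ ProperTri P Q R := by
  have hPM := dotProduct_mem_nonZeroDivisors hPQ hPL hQL hQM hLM
  obtain ⟨R, hRM, rfl⟩ := exists_incid_cross_eq hQ hQM
  rw [coords_cross] at hPM
  exact ⟨R, trivAnn_right_of_not_nbr (not_nbr_iff_trivAnn_cross.mpr hM), hRM,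
    properTri_of_tripleProduct_mem_nonZeroDivisors hPM⟩

theorem exists_properQuad (h : ProperTri P Q R) : ∃ S, TrivAnn S ∧ ProperQuad P Q R S := by
  have hdet := properTri_iff_tripleProduct_mem_nonZeroDivisors.mp h
  have hquad := properQuad_of_tripleProduct_mem_nonZeroDivisors hdet
  have hPQS : ProperTri P Q (P + Q + R) := hquad 0 1 3 (by decide) (by decide) (by decide)
  exact ⟨P + Q + R, trivAnn_right_of_not_nbr hPQS.2.1, hquad⟩

end Geometry

theorem stmt13_general (V : Type) [CommRing V] [Ring.KrullDimLE 0 V] :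
    (∀ P₁ : V × V × V, TrivAnn P₁ → ∃ L₁ : V × V × V, TrivAnn L₁ ∧ Incid P₁ L₁) ∧
    (∀ P₁ L₁ : V × V × V, TrivAnn P₁ → TrivAnn L₁ → Incid P₁ L₁ →
      ∃ P₂ : V × V × V, TrivAnn P₂ ∧ Incid P₂ L₁ ∧ ¬ Nbr P₁ P₂) ∧
    (∀ P₁ L₁ P₂ : V × V × V, TrivAnn P₁ → TrivAnn L₁ → TrivAnn P₂ →
      Incid P₁ L₁ → Incid P₂ L₁ → ¬ Nbr P₁ P₂ →
      ∃ L₂ : V × V × V, TrivAnn L₂ ∧ Incid P₂ L₂ ∧ ¬ Nbr L₁ L₂) ∧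
    (∀ P₁ L₁ P₂ L₂ : V × V × V, TrivAnn P₁ → TrivAnn L₁ → TrivAnn P₂ → TrivAnn L₂ →
      Incid P₁ L₁ → Incid P₂ L₁ → ¬ Nbr P₁ P₂ → Incid P₂ L₂ → ¬ Nbr L₁ L₂ →
      ∃ P₃ : V × V × V, TrivAnn P₃ ∧ Incid P₃ L₂ ∧ ProperTri P₁ P₂ P₃) ∧
    (∀ P₁ P₂ P₃ : V × V × V, TrivAnn P₁ → TrivAnn P₂ → TrivAnn P₃ →
      ProperTri P₁ P₂ P₃ →
      ∃ P₄ : V × V × V, TrivAnn P₄ ∧ ProperQuad P₁ P₂ P₃ P₄) := by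
  refine ⟨fun _ ↦ exists_incid, fun _ _ ↦ exists_incid_not_nbr, ?_, ?_, ?_⟩
  · intro _ L₁ P₂ _ hL₁ hP₂ _ hP₂L₁ _
    simpa only [incid_comm] using exists_incid_not_nbr hL₁ hP₂ (incid_comm.mp hP₂L₁)
  · intro _ _ _ _ _ _ hP₂ hL₂ hP₁L₁ hP₂L₁ hP₁P₂ hP₂L₂ hL₁L₂
    exact exists_incid_properTri hP₂ hL₂ hP₁P₂ hP₁L₁ hP₂L₁ hP₂L₂ hL₁L₂
  · exact fun _ _ _ _ _ _ ↦ exists_properQuad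

/-- In `𝒢(V)`: (i) every point lies on a line; (ii) every flag `(P₁,L₁)`
extends by a point `P₂` of `L₁` not neighboring `P₁`; (iii) every such triple extends by a
line `L₂` through `P₂` not neighboring `L₁`; (iv) every such quadruple extends by a point
`P₃` on `L₂` with `(P₁,P₂,P₃)` a proper ordered triangle; (v) every proper ordered triangle
extends to a proper ordered quadrangle. -/
theorem stmt13 (K : Type) [Field K] (V : Type) [CommRing V] [Algebra K V] (r s : V)
    (hV : GoodAlg K V r s) :
    (∀ P₁ : V × V × V, TrivAnn P₁ → ∃ L₁ : V × V × V, TrivAnn L₁ ∧ Incid P₁ L₁) ∧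
    (∀ P₁ L₁ : V × V × V, TrivAnn P₁ → TrivAnn L₁ → Incid P₁ L₁ →
      ∃ P₂ : V × V × V, TrivAnn P₂ ∧ Incid P₂ L₁ ∧ ¬ Nbr P₁ P₂) ∧
    (∀ P₁ L₁ P₂ : V × V × V, TrivAnn P₁ → TrivAnn L₁ → TrivAnn P₂ →
      Incid P₁ L₁ → Incid P₂ L₁ → ¬ Nbr P₁ P₂ →
      ∃ L₂ : V × V × V, TrivAnn L₂ ∧ Incid P₂ L₂ ∧ ¬ Nbr L₁ L₂) ∧
    (∀ P₁ L₁ P₂ L₂ : V × V × V, TrivAnn P₁ → TrivAnn L₁ → TrivAnn P₂ → TrivAnn L₂ →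
      Incid P₁ L₁ → Incid P₂ L₁ → ¬ Nbr P₁ P₂ → Incid P₂ L₂ → ¬ Nbr L₁ L₂ →
      ∃ P₃ : V × V × V, TrivAnn P₃ ∧ Incid P₃ L₂ ∧ ProperTri P₁ P₂ P₃) ∧
    (∀ P₁ P₂ P₃ : V × V × V, TrivAnn P₁ → TrivAnn P₂ → TrivAnn P₃ →
      ProperTri P₁ P₂ P₃ →
      ∃ P₄ : V × V × V, TrivAnn P₄ ∧ ProperQuad P₁ P₂ P₃ P₄) := by
  have : FiniteDimensional K V := Module.finite_of_finrank_eq_succ hV.1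
  have : IsArtinianRing V := .of_finite K V
  exact stmt13_general V
end

section
/- Let K be a field, t,n ∈ K, and let V = {x·𝔯 + y·𝔦 : x,y ∈ K} ⊆ M₂(K), where 𝔯 is the 2×2 identity matrix and 𝔦 = [[0,1],[−n,t]]. For a triple (M,N,L) ∈ V³ with trivial annihilator in V (P·M = P·N = P·L = 0 with P ∈ V implies P = 0), let H(M,N,L) ∈ M₃(V) be the 3×3 matrix over V whose (i,j) entry is Pᵢ·(Pⱼ)ᵃᵈʲ, where (P₁,P₂,P₃) = (M,N,L) and Xᵃᵈʲ denotes the adjugate of the 2×2 matrix X. Then the K-linear span of the set of all matrices H(M,N,L), inside the 18-dimensional K-vector space M₃(V), has dimension exactly 9. -/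
/-- `A` belongs to the 2-dimensional matrix algebra `V = {x·𝔯 + y·𝔦}` inside `M₂(K)`,
where `𝔯` is the identity matrix and `𝔦 = [[0,1],[−n,t]]`. -/
def InV {K : Type} [Field K] (t n : K) (A : Matrix (Fin 2) (Fin 2) K) : Prop :=
  ∃ x y : K, A = x • (1 : Matrix (Fin 2) (Fin 2) K) + y • !![0, 1; -n, t]

/-- The Hermitian 3×3 matrix `H(M,N,L)` over `V` with `(i,j)` entry `Pᵢ·(Pⱼ)ᵃᵈʲ`, where
`(P₁,P₂,P₃) = (M,N,L)`. -/
def Hmat {K : Type} [Field K] (M N L : Matrix (Fin 2) (Fin 2) K) :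
    Matrix (Fin 3) (Fin 3) (Matrix (Fin 2) (Fin 2) K) :=
  Matrix.of fun i j => (![M, N, L] i) * (![M, N, L] j).adjugate

/-!
`V` is the quadratic algebra `K[ω]`, `ω² = tω - n`, embedded in `M₂(K)` by `ω ↦ 𝔦`, and the
adjugate is its conjugation. So `H(M,N,L)` is the rank-one Hermitian matrix `v vᴴ` over `K[ω]`,
whose diagonal entries are norms, hence scalars. Hermitian matrices of size `d` with scalar diagonal
form a space of dimension `d + 2 * (d choose 2) = d ^ 2`. Rank-one matrices span it:
`eᵢ eᵢᴴ = Eᵢᵢ`, and expanding `v vᴴ` for `v = z eᵢ + eⱼ` leaves `z Eᵢⱼ + z̄ Eⱼᵢ` modulo the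
diagonal ones.
-/

open Matrix QuadraticAlgebra

theorem vecMulVec_single_single {l m α : Type*} [DecidableEq l] [DecidableEq m] [MulZeroClass α]
    (i : l) (j : m) (x y : α) :
    vecMulVec (Pi.single i x) (Pi.single j y) = single i j (x * y) := by
  ext i' j'
  by_cases hi : i = i' <;> by_cases hj : j = j' <;>
    simp [vecMulVec_apply, hi, hj, eq_comm]

section QuadraticAlgebra

variable {R ι : Type*} [CommRing R] {a b : R}

/-- The Hermitian matrices over the quadratic algebra `R[ω]`, `ω² = a + bω`, whose diagonal entries
lie in `R`. The diagonal condition is not implied by the Hermitian one: if `b = 0` and `2 = 0`, the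
conjugation is trivial. -/
def scalarDiagHermitian (ι : Type*) (a b : R) :
    Submodule R (Matrix ι ι (QuadraticAlgebra R a b)) where
  carrier := {A | A.IsHermitian ∧ ∀ i, (A i i).im = 0}
  add_mem' hA hB := ⟨hA.1.add hB.1, fun i => by simp [hA.2 i, hB.2 i]⟩
  zero_mem' := ⟨isHermitian_zero, fun _ => rfl⟩
  smul_mem' r A hA := by
    refine ⟨.ext fun i j => ?_, fun i => by simp [hA.2 i]⟩
    rw [Matrix.smul_apply, Matrix.smul_apply, ← hA.1.apply i j]
    exact QuadraticAlgebra.ext (by simp [mul_add, mul_left_comm]) (by simp)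

/-- The coordinates of a Hermitian matrix with scalar diagonal: on and above the diagonal the
`R`-parts of its entries, and at a position below the diagonal the `ω`-part of the mirror entry. -/
def scalarDiagHermitianEquiv [LinearOrder ι] :
    scalarDiagHermitian ι a b ≃ₗ[R] Matrix ι ι R where
  toFun A := of fun i j => if i ≤ j then (A.1 i j).re else (A.1 j i).im
  map_add' A B := by ext i j; by_cases h : i ≤ j <;> simp [h]
  map_smul' r A := by ext i j; by_cases h : i ≤ j <;> simp [h]
  invFun c :=
    ⟨of fun i j =>
        if i < j then ⟨c i j, c j i⟩ else if j < i then star ⟨c j i, c i j⟩ else ⟨c i j, 0⟩,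
      .ext fun i j => by
        rcases lt_trichotomy i j with h | rfl | h <;> ext <;> simp [*, not_lt_of_gt],
      fun i => by simp⟩
  left_inv A := by
    refine Subtype.ext (Matrix.ext fun i j => ?_)
    rcases lt_trichotomy i j with h | rfl | h
    · simp [h, h.le, h.not_ge]
    · exact QuadraticAlgebra.ext (by simp) (by simp [A.2.2])
    · rw [← A.2.1.apply i j]
      exact QuadraticAlgebra.ext (by simp [h, h.le, h.not_ge, h.not_gt])
        (by simp [h, h.le, h.not_gt])
  right_inv c := by
    ext i j
    rcases lt_trichotomy i j with h | rfl | h <;> simp [*, le_of_lt, not_le_of_gt]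

theorem finrank_scalarDiagHermitian [Nontrivial R] [Fintype ι] (a b : R) :
    Module.finrank R (scalarDiagHermitian ι a b) = Fintype.card ι ^ 2 := by
  let : LinearOrder ι := LinearOrder.lift' (Fintype.equivFin ι) (Fintype.equivFin ι).injective
  rw [scalarDiagHermitianEquiv.finrank_eq, Module.finrank_matrix, Module.finrank_self, mul_one, sq]

/-- The rank-one Hermitian matrices `v vᴴ` attached to the vectors `v` over a star ring `A` that are
annihilated by no nonzero scalar. -/
def rankOneHermitians (ι A : Type*) [CommRing A] [StarRing A] : Set (Matrix ι ι A) :=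
  {H | ∃ v : ι → A, (∀ p : A, p • v = 0 → p = 0) ∧ H = vecMulVec v (star v)}

theorem vecMulVec_star_mem_rankOneHermitians {A : Type*} [CommRing A] [StarRing A] {v : ι → A}
    {i : ι} (hi : v i = 1) : vecMulVec v (star v) ∈ rankOneHermitians ι A :=
  ⟨v, fun p hp => by simpa [hi] using congrFun hp i, rfl⟩

theorem rankOneHermitians_subset_scalarDiagHermitian :
    rankOneHermitians ι (QuadraticAlgebra R a b) ⊆ scalarDiagHermitian ι a b := by
  rintro _ ⟨v, -, rfl⟩
  refine ⟨?_, fun i => ?_⟩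
  · rw [IsHermitian, conjTranspose_vecMulVec, star_star]
  · rw [vecMulVec_apply, Pi.star_apply, ← algebraMap_norm_eq_mul_star, algebraMap_im]

section Span

variable [DecidableEq ι]

theorem vecMulVec_star_single_add_single {A : Type*} [CommRing A] [StarRing A] (i j : ι) (z : A) :
    vecMulVec (Pi.single i z + Pi.single j 1) (star (Pi.single i z + Pi.single j 1)) =
      single i i (z * star z) + single j j 1 + (single i j z + (single i j z)ᴴ) := by
  simp only [star_add, Pi.star_single, star_one, add_vecMulVec, vecMulVec_add,
    vecMulVec_single_single, conjTranspose_single, mul_one, one_mul]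
  abel

theorem single_self_mem_span_rankOneHermitians (i : ι) (r : R) :
    single i i (algebraMap R _ r) ∈
      Submodule.span R (rankOneHermitians ι (QuadraticAlgebra R a b)) := by
  have h : single i i 1 ∈ rankOneHermitians ι (QuadraticAlgebra R a b) := by
    simpa [vecMulVec_single_single] using
      vecMulVec_star_mem_rankOneHermitians (A := QuadraticAlgebra R a b) (Pi.single_eq_same i 1)
  simpa [smul_single, Algebra.algebraMap_eq_smul_one] using
    Submodule.smul_mem _ r (Submodule.subset_span h)

theorem single_add_conjTranspose_mem_span_rankOneHermitians {i j : ι} (hij : i ≠ j)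
    (z : QuadraticAlgebra R a b) :
    single i j z + (single i j z)ᴴ ∈
      Submodule.span R (rankOneHermitians ι (QuadraticAlgebra R a b)) := by
  have hv : (Pi.single i z + Pi.single j 1 : ι → QuadraticAlgebra R a b) j = 1 := by
    simp [hij.symm]
  have hmem := Submodule.subset_span (R := R) (vecMulVec_star_mem_rankOneHermitians hv)
  rw [vecMulVec_star_single_add_single, ← algebraMap_norm_eq_mul_star] at hmem
  refine (Submodule.add_mem_iff_right _ (add_mem ?_ ?_)).1 hmem
  · exact single_self_mem_span_rankOneHermitians i _
  · simpa using single_self_mem_span_rankOneHermitians (a := a) (b := b) j (1 : R)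

end Span

theorem add_conjTranspose_mem_span_rankOneHermitians [Finite ι]
    {U : Matrix ι ι (QuadraticAlgebra R a b)} (hU : U.diag = 0) :
    U + Uᴴ ∈ Submodule.span R (rankOneHermitians ι (QuadraticAlgebra R a b)) := by
  classical
  cases nonempty_fintype ι
  have hsum : U + Uᴴ = ∑ i, ∑ j, (single i j (U i j) + (single i j (U i j))ᴴ) := by
    simp only [Finset.sum_add_distrib, ← conjTranspose_sum, ← matrix_eq_sum_single]
  rw [hsum]
  refine sum_mem fun i _ => sum_mem fun j _ => ?_
  obtain rfl | hij := eq_or_ne i j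
  · simp [show U i i = 0 from congrFun hU i]
  · exact single_add_conjTranspose_mem_span_rankOneHermitians hij _

theorem diagonal_mem_span_rankOneHermitians [Finite ι] [DecidableEq ι] (d : ι → R) :
    diagonal (fun i => algebraMap R _ (d i)) ∈
      Submodule.span R (rankOneHermitians ι (QuadraticAlgebra R a b)) := by
  cases nonempty_fintype ι
  rw [← sum_single_eq_diagonal]
  exact sum_mem fun i _ => single_self_mem_span_rankOneHermitians i _

theorem exists_eq_diagonal_add_add_conjTranspose [DecidableEq ι]
    {A : Matrix ι ι (QuadraticAlgebra R a b)} (hA : A ∈ scalarDiagHermitian ι a b) :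
    ∃ (d : ι → R) (U : Matrix ι ι (QuadraticAlgebra R a b)), U.diag = 0 ∧
      A = diagonal (fun i => algebraMap R _ (d i)) + (U + Uᴴ) := by
  let : LinearOrder ι := IsWellOrder.linearOrder WellOrderingRel
  refine ⟨fun i => (A i i).re, of fun i j => if i < j then A i j else 0, by ext1; simp, ?_⟩
  refine Matrix.ext fun i j => ?_
  rcases lt_trichotomy i j with h | rfl | h
  · simp [h, h.ne, h.not_gt]
  · exact QuadraticAlgebra.ext (by simp) (by simp [hA.2])
  · simp [h, h.ne', h.not_gt, hA.1.apply]

theorem span_rankOneHermitians [Finite ι] (a b : R) :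
    Submodule.span R (rankOneHermitians ι (QuadraticAlgebra R a b)) =
      scalarDiagHermitian ι a b := by
  classical
  refine (Submodule.span_le.2 rankOneHermitians_subset_scalarDiagHermitian).antisymm fun A hA => ?_
  obtain ⟨d, U, hU, rfl⟩ := exists_eq_diagonal_add_add_conjTranspose hA
  exact add_mem (diagonal_mem_span_rankOneHermitians d)
    (add_conjTranspose_mem_span_rankOneHermitians hU)

end QuadraticAlgebra

section Companion

variable {R : Type*} [CommRing R] (t n : R)

/-- The module `V = {x·𝔯 + y·𝔦}` inside `M₂(R)`, over any commutative ring `R`. -/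
def companionSpan : Submodule R (Matrix (Fin 2) (Fin 2) R) :=
  Submodule.span R {1, !![0, 1; -n, t]}

/-- The embedding of `R[ω]`, `ω² = tω - n`, into `M₂(R)` that sends `ω` to `𝔦`. -/
def companionHom : QuadraticAlgebra R (-n) t →ₐ[R] Matrix (Fin 2) (Fin 2) R :=
  lift ⟨!![0, 1; -n, t], by ext i j; fin_cases i <;> fin_cases j <;> simp⟩

theorem companionHom_apply (z : QuadraticAlgebra R (-n) t) :
    companionHom t n z = z.re • 1 + z.im • !![0, 1; -n, t] := by
  simp [companionHom]

theorem companionHom_injective : Function.Injective (companionHom t n) := by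
  intro z w h
  rw [companionHom_apply, companionHom_apply] at h
  ext
  · simpa using congrFun₂ h 0 0
  · simpa using congrFun₂ h 0 1

theorem companionHom_star (z : QuadraticAlgebra R (-n) t) :
    companionHom t n (star z) = (companionHom t n z).adjugate := by
  rw [companionHom_apply, companionHom_apply, adjugate_fin_two]
  ext i j
  fin_cases i <;> fin_cases j <;> simp <;> ring

theorem mem_companionSpan_iff {A : Matrix (Fin 2) (Fin 2) R} :
    A ∈ companionSpan t n ↔ ∃ z, companionHom t n z = A := by
  simp only [companionSpan, Submodule.mem_span_pair, companionHom_apply]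
  exact ⟨fun ⟨x, y, h⟩ => ⟨⟨x, y⟩, h⟩, fun ⟨z, h⟩ => ⟨z.re, z.im, h⟩⟩

/-- The matrices `(Pᵢ · Pⱼᵃᵈʲ)` over `M₂(R)` attached to the families `P` of elements of `V` with
trivial annihilator in `V`; for families of length three these are the `H(M,N,L)`. -/
def adjugateHermitians (ι : Type*) : Set (Matrix ι ι (Matrix (Fin 2) (Fin 2) R)) :=
  {H | ∃ P : ι → Matrix (Fin 2) (Fin 2) R, (∀ i, P i ∈ companionSpan t n) ∧
    (∀ Q ∈ companionSpan t n, (∀ i, Q * P i = 0) → Q = 0) ∧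
    H = of fun i j => P i * (P j).adjugate}

theorem adjugateHermitians_eq_image (ι : Type*) :
    adjugateHermitians t n ι =
      (companionHom t n).toLinearMap.mapMatrix '' rankOneHermitians ι _ := by
  have hmap (v : ι → QuadraticAlgebra R (-n) t) :
      (companionHom t n).toLinearMap.mapMatrix (vecMulVec v (star v)) =
        of fun i j => companionHom t n (v i) * (companionHom t n (v j)).adjugate := by
    ext1 i j
    simp [vecMulVec_apply, companionHom_star]
  have hann (v : ι → QuadraticAlgebra R (-n) t) :
      (∀ Q ∈ companionSpan t n, (∀ i, Q * companionHom t n (v i) = 0) → Q = 0) ↔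
        ∀ p : QuadraticAlgebra R (-n) t, p • v = 0 → p = 0 := by
    simp [mem_companionSpan_iff, ← map_mul, funext_iff,
      map_eq_zero_iff _ (companionHom_injective t n)]
  ext H
  constructor
  · rintro ⟨P, hP, hPann, rfl⟩
    simp only [mem_companionSpan_iff] at hP
    choose v hv using hP
    obtain rfl : (fun i => companionHom t n (v i)) = P := funext hv
    exact ⟨_, ⟨v, (hann v).1 hPann, rfl⟩, hmap v⟩
  · rintro ⟨_, ⟨v, hv, rfl⟩, rfl⟩
    exact ⟨fun i => companionHom t n (v i), fun i => (mem_companionSpan_iff t n).2 ⟨v i, rfl⟩,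
      (hann v).2 hv, hmap v⟩

theorem stmt15_general (ι : Type*) [Nontrivial R] [Fintype ι] :
    Module.finrank R (Submodule.span R (adjugateHermitians t n ι)) = Fintype.card ι ^ 2 := by
  have hinj : Function.Injective ((companionHom t n).toLinearMap.mapMatrix (m := ι) (n := ι)) :=
    map_injective (companionHom_injective t n)
  rw [adjugateHermitians_eq_image, Submodule.span_image,
    ← (Submodule.equivMapOfInjective _ hinj _).finrank_eq, span_rankOneHermitians,
    finrank_scalarDiagHermitian]

end Companion

theorem adjugateHermitians_fin_three {K : Type} [Field K] (t n : K) :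
    adjugateHermitians t n (Fin 3) =
      {H | ∃ M N L : Matrix (Fin 2) (Fin 2) K, InV t n M ∧ InV t n N ∧ InV t n L ∧
        (∀ P : Matrix (Fin 2) (Fin 2) K, InV t n P →
          P * M = 0 → P * N = 0 → P * L = 0 → P = 0) ∧
        H = Hmat M N L} := by
  have hV (A : Matrix (Fin 2) (Fin 2) K) : A ∈ companionSpan t n ↔ InV t n A := by
    simp only [companionSpan, Submodule.mem_span_pair, InV, eq_comm]
  ext H
  simp [adjugateHermitians, hV, Hmat, Fin.exists_fin_succ_pi, Fin.forall_fin_succ, and_assoc]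

/-- The `K`-linear span of the matrices `H(M,N,L)`, for `(M,N,L) ∈ V³`
with trivial annihilator in `V`, has dimension exactly `9` over `K`. -/
theorem stmt15 (K : Type) [Field K] (t n : K) :
    Module.finrank K
      ↥(Submodule.span K
        {H : Matrix (Fin 3) (Fin 3) (Matrix (Fin 2) (Fin 2) K) |
          ∃ M N L : Matrix (Fin 2) (Fin 2) K,
            InV t n M ∧ InV t n N ∧ InV t n L ∧
            (∀ P : Matrix (Fin 2) (Fin 2) K, InV t n P →
              P * M = 0 → P * N = 0 → P * L = 0 → P = 0) ∧
            H = Hmat M N L}) = 9 := by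
  rw [← adjugateHermitians_fin_three, stmt15_general, Fintype.card_fin]
  norm_num
end

section
/- Let K be a field, t,n ∈ K, and let V = {x·𝔯 + y·𝔦 : x,y ∈ K} ⊆ M₂(K), where 𝔯 is the 2×2 identity matrix and 𝔦 = [[0,1],[−n,t]]. Call a 3×3 matrix H over V Hermitian if every diagonal entry of H lies in K·𝔯 and H_{ji} = (H_{ij})ᵃᵈʲ for all i,j, and say H has rank 1 if for every two rows R₁,R₂ of H there exist a,b ∈ V with a·R₁ + b·R₂ = 0 (entrywise) such that no nonzero c ∈ V satisfies a·c = b·c = 0. Then the set of rank-1 Hermitian 3×3 matrices over V is exactly the set of K-scalar multiples of matrices H(M,N,L) whose (i,j) entry is Pᵢ·(Pⱼ)ᵃᵈʲ, where (P₁,P₂,P₃) = (M,N,L) ranges over the triples in V³ with trivial annihilator in V. -/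
/-- A 3×3 matrix `H` over `V` is Hermitian: all entries lie in `V`, the diagonal entries lie
in `K·𝔯`, and `H j i` is the adjugate of `H i j`. -/
def IsHermitian3 {K : Type} [Field K] (t n : K)
    (H : Matrix (Fin 3) (Fin 3) (Matrix (Fin 2) (Fin 2) K)) : Prop :=
  (∀ i j, InV t n (H i j)) ∧
  (∀ i, ∃ k : K, H i i = k • (1 : Matrix (Fin 2) (Fin 2) K)) ∧
  (∀ i j, H j i = (H i j).adjugate)

/-- `H` has rank 1: for every two rows `Rᵢ, Rⱼ` there are `a, b ∈ V` with `a·Rᵢ + b·Rⱼ = 0`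
such that no nonzero `c ∈ V` satisfies `a·c = b·c = 0`. -/
def HasRankOne {K : Type} [Field K] (t n : K)
    (H : Matrix (Fin 3) (Fin 3) (Matrix (Fin 2) (Fin 2) K)) : Prop :=
  ∀ i j : Fin 3, ∃ a b : Matrix (Fin 2) (Fin 2) K, InV t n a ∧ InV t n b ∧
    (∀ col : Fin 3, a * H i col + b * H j col = 0) ∧
    (∀ c : Matrix (Fin 2) (Fin 2) K, InV t n c → a * c = 0 → b * c = 0 → c = 0)

/-!
Identify `V` with the quadratic algebra `A = K[ω]`, `ω² = -n + t ω`, the adjugate becoming its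
involution. If `H` is Hermitian of rank 1, its `2 × 2` minors vanish, hence
`(H v) (H v)* = (v* H v) H` for every vector `v`. As soon as `μ = v* H v ∈ K` is nonzero,
`P = H v` gives `H = μ⁻¹ P P*`, and `P` has trivial annihilator because `v* P = μ` is a unit. Such
a `v` exists unless `H = 0`: take a basis vector `eᵢ` if `H i i ≠ 0` for some `i`, otherwise
`eᵢ + eⱼ`, where `v* H v` is the trace of `H i j`; if the diagonal and all these traces vanish,
the linear relation between rows `i` and `j` forces `H i j = 0`. Conversely, two rows
of `P P*` are multiples of the same vector by `P i` and `P j`, and any two elements of `A` satisfy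
a linear relation whose coefficients have trivial annihilator, as `A` is two-dimensional over `K`.
-/

open Matrix QuadraticAlgebra

section CommRing

variable {ι m n K R : Type*}

/-- The family `P` has trivial annihilator: no nonzero element of `R` kills all of its members. -/
def HasTrivialAnnihilator [Mul R] [Zero R] (P : ι → R) : Prop :=
  ∀ c, (∀ i, c * P i = 0) → c = 0

theorem hasTrivialAnnihilator_pair [CommSemiring R] {u v : R} :
    HasTrivialAnnihilator ![u, v] ↔ ∀ c, u * c = 0 → v * c = 0 → c = 0 := by
  simp [HasTrivialAnnihilator, Fin.forall_fin_two, mul_comm]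

/-- A matrix over a ring has rank 1 if any two of its rows (possibly equal) satisfy a linear
relation whose pair of coefficients has trivial annihilator. The zero matrix has rank 1 in this
sense. -/
def IsRankOne [Mul R] [AddZeroClass R] (H : Matrix m n R) : Prop :=
  ∀ i j, ∃ u v : R, (∀ l, u * H i l + v * H j l = 0) ∧ HasTrivialAnnihilator ![u, v]

/-- Hermitian matrices over a `K`-algebra with involution, with diagonal entries in `K`.
The diagonal is a separate condition because elements fixed by the involution need not be scalars:
in characteristic 2 the involution of `K[ω]` can be trivial. -/
def IsScalarHermitian (K : Type*) [CommSemiring K] [Semiring R] [Algebra K R] [Star R]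
    (H : Matrix ι ι R) : Prop :=
  H.IsHermitian ∧ ∀ i, H i i ∈ Set.range (algebraMap K R)

theorem IsRankOne.mul_eq_mul [CommRing R] {H : Matrix m n R} (hH : IsRankOne H) (i j : m)
    (k l : n) : H i k * H j l = H i l * H j k := by
  obtain ⟨u, v, huv, hann⟩ := hH i j
  refine sub_eq_zero.mp (hasTrivialAnnihilator_pair.mp hann _ ?_ ?_)
  · linear_combination H j l * huv k - H j k * huv l
  · linear_combination H i k * huv l - H i l * huv k

theorem vecMulVec_mulVec_vecMul_of_mul_eq_mul [CommSemiring R] [Fintype m] [Fintype n]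
    {M : Matrix m n R} (hM : ∀ i j k l, M i k * M j l = M i l * M j k) (v : n → R) (w : m → R) :
    vecMulVec (M *ᵥ v) (w ᵥ* M) = (w ⬝ᵥ M *ᵥ v) • M := by
  ext i l
  simp only [vecMulVec_apply, mulVec, vecMul, dotProduct, Matrix.smul_apply, smul_eq_mul,
    Finset.mul_sum, Finset.sum_mul]
  refine Finset.sum_congr rfl fun j _ => Finset.sum_congr rfl fun k _ => ?_
  calc
    M i k * v k * (w j * M j l) = w j * v k * (M i k * M j l) := by ring
    _ = w j * v k * (M i l * M j k) := by rw [hM]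
    _ = w j * (M j k * v k) * M i l := by ring

theorem IsRankOne.vecMulVec_mulVec_star [CommRing R] [StarRing R] [Fintype ι] {H : Matrix ι ι R}
    (hrank : IsRankOne H) (hH : H.IsHermitian) (v : ι → R) :
    vecMulVec (H *ᵥ v) (star (H *ᵥ v)) = (star v ⬝ᵥ H *ᵥ v) • H := by
  rw [star_mulVec, hH.eq, vecMulVec_mulVec_vecMul_of_mul_eq_mul hrank.mul_eq_mul]

theorem HasTrivialAnnihilator.of_isUnit_dotProduct [CommSemiring R] [Fintype ι] {P w : ι → R}
    (h : IsUnit (w ⬝ᵥ P)) : HasTrivialAnnihilator P := by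
  intro c hc
  refine h.mul_left_eq_zero.mp ?_
  rw [dotProduct, Finset.mul_sum]
  exact Finset.sum_eq_zero fun i _ => by rw [mul_left_comm, hc, mul_zero]

theorem IsRankOne.exists_eq_smul_vecMulVec [Field K] [CommRing R] [Algebra K R] [StarRing R]
    [Fintype ι] {H : Matrix ι ι R} (hrank : IsRankOne H) (hH : H.IsHermitian) {v : ι → R} {μ : K}
    (hμ : μ ≠ 0) (hv : algebraMap K R μ = star v ⬝ᵥ H *ᵥ v) :
    ∃ (k : K) (P : ι → R), HasTrivialAnnihilator P ∧ H = k • vecMulVec P (star P) := by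
  refine ⟨μ⁻¹, H *ᵥ v, .of_isUnit_dotProduct (w := star v) ?_, ?_⟩
  · exact hv ▸ hμ.isUnit.map (algebraMap K R)
  · rw [hrank.vecMulVec_mulVec_star hH, ← hv, algebraMap_smul, inv_smul_smul₀ hμ]

end CommRing

section QuadraticAlgebraCommRing

variable {ι K : Type*} [CommRing K] {a b : K}

theorem star_smul_quadraticAlgebra (k : K) (z : QuadraticAlgebra K a b) :
    star (k • z) = k • star z := by
  ext <;> simp [mul_add, mul_left_comm]

theorem isScalarHermitian_smul_vecMulVec_star (k : K) (P : ι → QuadraticAlgebra K a b) :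
    IsScalarHermitian K (k • vecMulVec P (star P)) := by
  refine ⟨?_, fun i => ⟨k * norm (P i), ?_⟩⟩
  · ext1 i j
    simp [vecMulVec_apply, star_smul_quadraticAlgebra, mul_comm]
  · simp [vecMulVec_apply, algebraMap_norm_eq_mul_star, Algebra.smul_def]

theorem IsRankOne.exists_trace_ne_zero {H : Matrix ι ι (QuadraticAlgebra K a b)}
    (hrank : IsRankOne H) (hH : H.IsHermitian) (hdiag : ∀ i, H i i = 0) (hne : H ≠ 0) :
    ∃ i j, trace (H i j) ≠ 0 := by
  by_contra! htrace
  have hskew (i j) : H j i = -H i j := by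
    rw [← hH.apply j i, star_eq, htrace, map_zero, zero_sub]
  refine hne (Matrix.ext fun i j => ?_)
  obtain ⟨u, v, huv, hann⟩ := hrank i j
  refine hasTrivialAnnihilator_pair.mp hann _ ?_ ?_
  · linear_combination huv j - v * hdiag j
  · linear_combination -huv i + u * hdiag i + v * hskew i j

end QuadraticAlgebraCommRing

section QuadraticAlgebraField

variable {ι K : Type*} [Field K] {a b : K}

theorem eq_zero_of_im_eq_zero_of_mul_eq_zero {z c : QuadraticAlgebra K a b} (hz : z.im = 0)
    (hc : c ≠ 0) (hzc : z * c = 0) : z = 0 := by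
  have hz_eq : z = algebraMap K _ z.re := QuadraticAlgebra.ext rfl hz
  have hre : z.re • c = 0 := by rw [Algebra.smul_def, ← hz_eq, hzc]
  rw [hz_eq, (smul_eq_zero.mp hre).resolve_right hc, map_zero]

/- If some `c ≠ 0` kills both `P` and `Q`, these lie in the proper ideal `Ann c`, which is at most
a line over `K`, so a relation with coefficients in `K` exists. -/
theorem exists_mul_add_mul_eq_zero (P Q : QuadraticAlgebra K a b) :
    ∃ u v, u * P + v * Q = 0 ∧ HasTrivialAnnihilator ![u, v] := by
  simp only [hasTrivialAnnihilator_pair]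
  by_cases hPQ : ∀ c, P * c = 0 → Q * c = 0 → c = 0
  · exact ⟨Q, -P, by ring, fun c hcQ hcP => hPQ c (by linear_combination -hcP) hcQ⟩
  push Not at hPQ
  obtain ⟨c, hcP, hcQ, hc⟩ := hPQ
  by_cases hP : P.im = 0
  · have hP_zero : P = 0 := eq_zero_of_im_eq_zero_of_mul_eq_zero hP hc hcP
    exact ⟨1, 0, by simp [hP_zero], fun d hd _ => by simpa using hd⟩
  · refine ⟨algebraMap K _ Q.im, algebraMap K _ (-P.im), ?_, fun d _ hd => ?_⟩
    · refine eq_zero_of_im_eq_zero_of_mul_eq_zero ?_ hc ?_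
      · simp [mul_comm]
      · linear_combination algebraMap K _ Q.im * hcP + algebraMap K _ (-P.im) * hcQ
    · exact ((neg_ne_zero.mpr hP).isUnit.map (algebraMap K _)).mul_right_eq_zero.mp hd

theorem IsRankOne.exists_dotProduct_mulVec_ne_zero [Fintype ι]
    {H : Matrix ι ι (QuadraticAlgebra K a b)} (hrank : IsRankOne H) (hH : IsScalarHermitian K H)
    (hne : H ≠ 0) : ∃ (v : ι → QuadraticAlgebra K a b) (μ : K),
      μ ≠ 0 ∧ algebraMap K _ μ = star v ⬝ᵥ H *ᵥ v := by
  classical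
  obtain ⟨hherm, hscalar⟩ := hH
  by_cases hdiag : ∀ i, H i i = 0
  · obtain ⟨i, j, hij⟩ := hrank.exists_trace_ne_zero hherm hdiag hne
    refine ⟨Pi.single i 1 + Pi.single j 1, trace (H i j), hij, ?_⟩
    rw [algebraMap_trace_eq_add_star, hherm.apply]
    simp [Pi.star_single, mulVec_add, hdiag, add_comm]
  · push Not at hdiag
    obtain ⟨i, hi⟩ := hdiag
    obtain ⟨μ, hμ⟩ := hscalar i
    refine ⟨Pi.single i 1, μ, fun h => hi (by rw [← hμ, h, map_zero]), ?_⟩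
    simp [Pi.star_single, hμ]

theorem isRankOne_smul_vecMulVec {m n : Type*} (k : K) (P : m → QuadraticAlgebra K a b)
    (Q : n → QuadraticAlgebra K a b) : IsRankOne (k • vecMulVec P Q) := by
  intro i j
  obtain ⟨u, v, huv, hann⟩ := exists_mul_add_mul_eq_zero (P i) (P j)
  refine ⟨u, v, fun l => ?_, hann⟩
  simp only [Matrix.smul_apply, vecMulVec_apply, Algebra.smul_def]
  linear_combination (algebraMap K _ k * Q l) * huv

theorem stmt16_general [Finite ι] [Nonempty ι] (H : Matrix ι ι (QuadraticAlgebra K a b)) :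
    IsScalarHermitian K H ∧ IsRankOne H ↔
      ∃ (k : K) (P : ι → QuadraticAlgebra K a b),
        HasTrivialAnnihilator P ∧ H = k • vecMulVec P (star P) := by
  cases nonempty_fintype ι
  constructor
  · rintro ⟨hH, hrank⟩
    rcases eq_or_ne H 0 with rfl | hne
    · exact ⟨0, 1, fun c hc => by simpa using hc, (zero_smul _ _).symm⟩
    · obtain ⟨v, μ, hμ, hv⟩ := hrank.exists_dotProduct_mulVec_ne_zero hH hne
      exact hrank.exists_eq_smul_vecMulVec hH.1 hμ hv
  · rintro ⟨k, P, -, rfl⟩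
    exact ⟨isScalarHermitian_smul_vecMulVec_star k P, isRankOne_smul_vecMulVec k P (star P)⟩

end QuadraticAlgebraField

section MatrixModel

variable {K : Type} [Field K] (t n : K)

/-- The embedding of `K[ω]`, `ω² = -n + t ω`, into `M₂(K)` sending `ω` to `𝔦`; its image is `V`. -/
def toMatrixTwo : QuadraticAlgebra K (-n) t →ₐ[K] Matrix (Fin 2) (Fin 2) K :=
  QuadraticAlgebra.lift ⟨!![0, 1; -n, t], by
    ext i j; fin_cases i <;> fin_cases j <;> simp [add_comm]⟩

variable {t n}

theorem toMatrixTwo_apply (z : QuadraticAlgebra K (-n) t) :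
    toMatrixTwo t n z = z.re • 1 + z.im • !![0, 1; -n, t] :=
  rfl

theorem inV_iff_mem_range {A : Matrix (Fin 2) (Fin 2) K} :
    InV t n A ↔ A ∈ Set.range (toMatrixTwo t n) :=
  ⟨fun ⟨x, y, h⟩ => ⟨⟨x, y⟩, h.symm⟩, fun ⟨z, h⟩ => ⟨z.re, z.im, h.symm⟩⟩

theorem exists_inV {p : Matrix (Fin 2) (Fin 2) K → Prop} :
    (∃ A, InV t n A ∧ p A) ↔ ∃ z, p (toMatrixTwo t n z) := by
  simp only [inV_iff_mem_range, Set.exists_range_iff]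

theorem forall_inV {p : Matrix (Fin 2) (Fin 2) K → Prop} :
    (∀ A, InV t n A → p A) ↔ ∀ z, p (toMatrixTwo t n z) := by
  simp only [inV_iff_mem_range, Set.forall_mem_range]

theorem toMatrixTwo_injective : Function.Injective (toMatrixTwo t n) := by
  intro z w h
  have hre := congrFun₂ h 0 0
  have him := congrFun₂ h 0 1
  simp only [toMatrixTwo_apply] at hre him
  exact QuadraticAlgebra.ext (by simpa using hre) (by simpa using him)

theorem toMatrixTwo_star (z : QuadraticAlgebra K (-n) t) :
    toMatrixTwo t n (star z) = (toMatrixTwo t n z).adjugate := by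
  ext i j
  fin_cases i <;> fin_cases j <;> simp [toMatrixTwo_apply, adjugate_fin_two, mul_comm]

theorem exists_map_toMatrixTwo_eq {l m : Type*} {H : Matrix l m (Matrix (Fin 2) (Fin 2) K)}
    (hH : ∀ i j, InV t n (H i j)) :
    ∃ G : Matrix l m (QuadraticAlgebra K (-n) t), H = G.map (toMatrixTwo t n) := by
  choose G hG using fun i j => inV_iff_mem_range.mp (hH i j)
  exact ⟨of G, Matrix.ext fun i j => (hG i j).symm⟩

theorem isHermitian3_map_iff {G : Matrix (Fin 3) (Fin 3) (QuadraticAlgebra K (-n) t)} :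
    IsHermitian3 t n (G.map (toMatrixTwo t n)) ↔ IsScalarHermitian K G := by
  have hV (i j : Fin 3) : InV t n (toMatrixTwo t n (G i j)) :=
    inV_iff_mem_range.mpr ⟨G i j, rfl⟩
  have hscalar (k : K) : k • 1 = toMatrixTwo t n (algebraMap K _ k) := by
    rw [AlgHom.commutes, Algebra.algebraMap_eq_smul_one]
  simp only [IsHermitian3, IsScalarHermitian, IsHermitian.ext_iff, map_apply, hV, implies_true,
    true_and, hscalar, ← toMatrixTwo_star, toMatrixTwo_injective.eq_iff, Set.mem_range]
  rw [and_comm, forall_comm]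
  simp only [eq_comm]

theorem hasRankOne_map_iff {G : Matrix (Fin 3) (Fin 3) (QuadraticAlgebra K (-n) t)} :
    HasRankOne t n (G.map (toMatrixTwo t n)) ↔ IsRankOne G := by
  simp only [HasRankOne, IsRankOne, hasTrivialAnnihilator_pair, exists_and_left, exists_inV,
    forall_inV, map_apply, ← map_mul, ← map_add, map_eq_zero_iff _ toMatrixTwo_injective]

theorem map_smul_vecMulVec_star (k : K) (P : Fin 3 → QuadraticAlgebra K (-n) t) :
    (k • vecMulVec P (star P)).map (toMatrixTwo t n) =
      k • Hmat (toMatrixTwo t n (P 0)) (toMatrixTwo t n (P 1)) (toMatrixTwo t n (P 2)) := by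
  have hP : ![toMatrixTwo t n (P 0), toMatrixTwo t n (P 1), toMatrixTwo t n (P 2)] =
      toMatrixTwo t n ∘ P := FinVec.etaExpand_eq (toMatrixTwo t n ∘ P)
  ext1 i j
  simp only [Hmat, hP, map_apply, Matrix.smul_apply, vecMulVec_apply, of_apply, Pi.star_apply,
    Function.comp_apply, map_smul, map_mul, toMatrixTwo_star]

theorem isHermitian3_and_hasRankOne_iff_exists_map
    {H : Matrix (Fin 3) (Fin 3) (Matrix (Fin 2) (Fin 2) K)} :
    IsHermitian3 t n H ∧ HasRankOne t n H ↔
      ∃ G, (IsScalarHermitian K G ∧ IsRankOne G) ∧ H = G.map (toMatrixTwo t n) := by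
  constructor
  · rintro ⟨hH, hrank⟩
    obtain ⟨G, rfl⟩ := exists_map_toMatrixTwo_eq hH.1
    exact ⟨G, ⟨isHermitian3_map_iff.mp hH, hasRankOne_map_iff.mp hrank⟩, rfl⟩
  · rintro ⟨G, ⟨hG, hrank⟩, rfl⟩
    exact ⟨isHermitian3_map_iff.mpr hG, hasRankOne_map_iff.mpr hrank⟩

theorem exists_eq_smul_hmat_iff_exists_map
    {H : Matrix (Fin 3) (Fin 3) (Matrix (Fin 2) (Fin 2) K)} :
    (∃ (k : K) (M N L : Matrix (Fin 2) (Fin 2) K), InV t n M ∧ InV t n N ∧ InV t n L ∧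
      (∀ P, InV t n P → P * M = 0 → P * N = 0 → P * L = 0 → P = 0) ∧ H = k • Hmat M N L) ↔
      ∃ G, (∃ (k : K) (P : Fin 3 → QuadraticAlgebra K (-n) t),
        HasTrivialAnnihilator P ∧ G = k • vecMulVec P (star P)) ∧
          H = G.map (toMatrixTwo t n) := by
  simp only [exists_and_left, exists_inV, forall_inV, ← map_mul,
    map_eq_zero_iff _ toMatrixTwo_injective]
  constructor
  · rintro ⟨k, x, y, z, hann, rfl⟩
    refine ⟨_, ⟨k, ![x, y, z], ?_, rfl⟩, (map_smul_vecMulVec_star k ![x, y, z]).symm⟩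
    exact fun c hc => hann c (hc 0) (hc 1) (hc 2)
  · rintro ⟨_, ⟨k, P, hP, rfl⟩, rfl⟩
    refine ⟨k, P 0, P 1, P 2, fun c h0 h1 h2 => hP c ?_, map_smul_vecMulVec_star k P⟩
    exact Fin.forall_fin_succ.mpr ⟨h0, Fin.forall_fin_two.mpr ⟨h1, h2⟩⟩

end MatrixModel

/-- The set of rank-1 Hermitian 3×3 matrices over `V` is exactly the set
of `K`-scalar multiples of the matrices `H(M,N,L)` with `(M,N,L) ∈ V³` of trivial
annihilator in `V`. -/
theorem stmt16 (K : Type) [Field K] (t n : K) :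
    {H : Matrix (Fin 3) (Fin 3) (Matrix (Fin 2) (Fin 2) K) |
        IsHermitian3 t n H ∧ HasRankOne t n H} =
      {H : Matrix (Fin 3) (Fin 3) (Matrix (Fin 2) (Fin 2) K) |
        ∃ (k : K) (M N L : Matrix (Fin 2) (Fin 2) K),
          InV t n M ∧ InV t n N ∧ InV t n L ∧
          (∀ P : Matrix (Fin 2) (Fin 2) K, InV t n P →
            P * M = 0 → P * N = 0 → P * L = 0 → P = 0) ∧
          H = k • Hmat M N L} := by
  ext H
  rw [Set.mem_ofPred_eq, Set.mem_ofPred_eq, isHermitian3_and_hasRankOne_iff_exists_map,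
    exists_eq_smul_hmat_iff_exists_map]
  simp only [stmt16_general]
end
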